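/- Structure of local minimizers: fix α>0, β>0 and M ∈ ℝ, let (a,b) be a bounded interval and let v be a local minimizer of JF(α,β,Mx,(a,b),·). Then: (i) if M ≠ 0 and b−a > L₀ := 2(α/(βM²))^{1/3}, then in (a,b) there exists either a jump point of v or a point y ∉ S_v with v(y)=My; (ii) at every jump point x of v one has v(x⁺)−Mx = Mx−v(x⁻), and this common value has the same sign as M when M ≠ 0; (iii) if x₁ < x₂ are two consecutive jump points of v, then v(x) = M(x₁+x₂)/2 for every x ∈ (x₁,x₂). -/

import Mathlib

/-! The local minimizer `v` is compared with competitors that replace a constant value `d` of `v`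
on an interval `[p,q)`, compactly contained in `(a,b)`, by another value `c` (`bump`). If this
creates at most `k` jumps, minimality reads
`0 ≤ α k + β (q - p) (c - d) (c + d - M (p + q))` (`comparison`).

* At a jump point `x`, `[x,x+t)` and `[x-t,x)` slide the jump to either side with `k = 0`
  (`jump_structure`). The first order in `t` gives the symmetry of the one-sided limits about `Mx`,
  the second order gives the sign.
* Between consecutive jumps, `c = M(x₁+x₂)/2` and `k = 0` turn the inequality into
  `(v - c)² ≤ 0` (`plateau_value`).
* If `v` has no jump, it is a constant `d`. Inserting the value `c = M(a+b)/2` on `[a+t,b-t)` costs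
  `k = 2` jumps, and `t → 0` gives `β (b-a) (d - c)² ≤ 2α` (`constant_bound`). If `d` does not cross
  the line, then `|d - c| ≥ |M| (b-a)/2`, so `b - a ≤ L₀` (`exists_jump_or_crossing`).
-/

open MeasureTheory Filter Set

namespace PeronaMalik

/-- `a_{δ,*} = δ⌊a/δ⌋`, the lower `δ`-approximation of `a`. -/
noncomputable def lowGrid (δ a : ℝ) : ℝ := δ * (⌊a / δ⌋ : ℤ)

/-- `b_δ^* = δ⌈b/δ⌉`, the upper `δ`-approximation of `b`. -/
noncomputable def highGrid (δ b : ℝ) : ℝ := δ * (⌈b / δ⌉ : ℤ)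

/-- `u` is piecewise constant at scale `δ`: constant on every interval `[zδ, (z+1)δ)`. -/
def IsPC (δ : ℝ) (u : ℝ → ℝ) : Prop :=
  ∀ z : ℤ, ∀ x ∈ Set.Ico ((z : ℝ) * δ) (((z : ℝ) + 1) * δ), u x = u ((z : ℝ) * δ)

/-- Discrete derivative `D^δ u (x) = (u(x+δ) - u(x))/δ`. -/
noncomputable def Dd (δ : ℝ) (u : ℝ → ℝ) (x : ℝ) : ℝ := (u (x + δ) - u x) / δ

/-- The discrete Perona–Malik functional with fidelity term on `(a,b)`. -/
noncomputable def DPMF (n : ℕ) (β : ℝ) (f : ℝ → ℝ) (a b : ℝ) (u : ℝ → ℝ) : ℝ :=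
  (∫ x in lowGrid (1 / (n : ℝ)) a..(highGrid (1 / (n : ℝ)) b - 1 / (n : ℝ)),
      Real.log (1 + (Dd (1 / (n : ℝ)) u x) ^ 2)) +
    β * ∫ x in a..b, (u x - f x) ^ 2

/-- `u` is a minimizer of `DPMF n β f (0,1)` over `PC_{1/n}(0,1)`. -/
def IsMinimizer (n : ℕ) (β : ℝ) (f : ℝ → ℝ) (u : ℝ → ℝ) : Prop :=
  IsPC (1 / (n : ℝ)) u ∧
    ∀ v : ℝ → ℝ, IsPC (1 / (n : ℝ)) v → DPMF n β f 0 1 u ≤ DPMF n β f 0 1 v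

/-- `m(n,β,f)`, the minimum value of the discrete Perona–Malik functional. -/
noncomputable def mval (n : ℕ) (β : ℝ) (f : ℝ → ℝ) : ℝ :=
  sInf ((fun u => DPMF n β f 0 1 u) '' {u | IsPC (1 / (n : ℝ)) u})

/-- `ω(n) = (log n / n)^{1/3}`. -/
noncomputable def omg (n : ℕ) : ℝ := (Real.log n / n) ^ ((1 : ℝ) / 3)

/-- `δ(n) = 1/(n ω(n))`. -/
noncomputable def dlt (n : ℕ) : ℝ := 1 / ((n : ℝ) * omg n)

/-- The rescaled discrete Perona–Malik functional. -/
noncomputable def RDPM (n : ℕ) (a b : ℝ) (u : ℝ → ℝ) : ℝ :=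
  (1 / omg n ^ 2) *
    ∫ x in lowGrid (dlt n) a..(highGrid (dlt n) b - dlt n),
      Real.log (1 + (Dd (dlt n) u x) ^ 2)

/-- The rescaled discrete Perona–Malik functional with fidelity term. -/
noncomputable def RDPMF (n : ℕ) (β : ℝ) (f : ℝ → ℝ) (a b : ℝ) (u : ℝ → ℝ) : ℝ :=
  RDPM n a b u + β * ∫ x in Set.Ioo a b, (u x - f x) ^ 2

/-- `u` is a step function with finitely many jumps on `(a,b)`. -/
def IsStep (a b : ℝ) (u : ℝ → ℝ) : Prop :=
  ∃ (s : Finset ℝ) (c : ℝ) (J : ℝ → ℝ),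
    (∀ p ∈ s, p ∈ Set.Ioo a b ∧ J p ≠ 0) ∧
    ∀ x ∈ Set.Ioo a b, u x = c + ∑ p ∈ s, (if p ≤ x then J p else 0)

/-- The set of jump (discontinuity) points of `u` inside `(a,b)`. -/
def jumpSet (a b : ℝ) (u : ℝ → ℝ) : Set ℝ :=
  {x ∈ Set.Ioo a b | ¬ ContinuousAt u x}

/-- The limit functional `JF(α,β,f,(a,b),u) = α·#jumps + β∫(u-f)²`. -/
noncomputable def JF (α β : ℝ) (f : ℝ → ℝ) (a b : ℝ) (u : ℝ → ℝ) : ℝ :=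
  α * ((jumpSet a b u).ncard : ℝ) + β * ∫ x in Set.Ioo a b, (u x - f x) ^ 2

/-- Strict convergence in `BV((a,b))`: `L¹` convergence plus convergence of
total variations. -/
def StrictBV (useq : ℕ → ℝ → ℝ) (u : ℝ → ℝ) (a b : ℝ) : Prop :=
  Tendsto (fun k => ∫ x in Set.Ioo a b, |useq k x - u x|) atTop (nhds 0) ∧
  Tendsto (fun k => eVariationOn (useq k) (Set.Ioo a b)) atTop
    (nhds (eVariationOn u (Set.Ioo a b)))

/-- Locally strict convergence in `BV_loc(ℝ)`: strict convergence on every bounded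
interval whose endpoints are not jump points of the limit. -/
def LocStrictBV (useq : ℕ → ℝ → ℝ) (u : ℝ → ℝ) : Prop :=
  ∀ a b : ℝ, a < b → ContinuousAt u a → ContinuousAt u b → StrictBV useq u a b

/-- `S(x) = 2⌊(x+1)/2⌋`. -/
noncomputable def stairS (x : ℝ) : ℝ := 2 * (⌊(x + 1) / 2⌋ : ℤ)

/-- The canonical `(H,V)`-staircase `S_{H,V}(x) = V·S(x/H)`. -/
noncomputable def canStair (H V : ℝ) (x : ℝ) : ℝ := V * stairS (x / H)

/-- Oblique translations of the canonical `(H,V)`-staircase. -/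
def Obl (H V : ℝ) (v : ℝ → ℝ) : Prop :=
  ∃ τ ∈ Set.Icc (-1 : ℝ) 1, ∀ x, v x = canStair H V (x - H * τ) + V * τ

/-- Graph translations of horizontal type of the canonical `(H,V)`-staircase. -/
def Orz (H V : ℝ) (v : ℝ → ℝ) : Prop :=
  ∃ τ ∈ Set.Icc (-1 : ℝ) 1, ∀ x, v x = canStair H V (x - H * τ)

/-- `μ_n(β,L,M)`: minimum of the rescaled functional with affine forcing term. -/
noncomputable def muDisc (n : ℕ) (β L M : ℝ) : ℝ :=
  sInf ((fun u => RDPMF n β (fun x => M * x) 0 L u) '' {u | IsPC (dlt n) u})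

/-- `μ*_n(β,L,M)`: same as `μ_n` but with boundary conditions `u(0)=0`, `u(L^*)=ML`. -/
noncomputable def muDiscStar (n : ℕ) (β L M : ℝ) : ℝ :=
  sInf ((fun u => RDPMF n β (fun x => M * x) 0 L u) ''
    {u | IsPC (dlt n) u ∧ u 0 = 0 ∧ u (highGrid (dlt n) L - dlt n) = M * L})

/-- `μ(α,β,L,M)`: minimum of the limit functional with affine forcing term. -/
noncomputable def muLim (α β L M : ℝ) : ℝ :=
  sInf ((fun u => JF α β (fun x => M * x) 0 L u) '' {u | IsStep 0 L u})

/-- `μ*(α,β,L,M)`: same as `μ` but with boundary values `u(0⁺)=0`, `u(L⁻)=ML`. -/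
noncomputable def muLimStar (α β L M : ℝ) : ℝ :=
  sInf ((fun u => JF α β (fun x => M * x) 0 L u) ''
    {u | IsStep 0 L u ∧ Tendsto u (nhdsWithin 0 (Set.Ioi 0)) (nhds 0) ∧
         Tendsto u (nhdsWithin L (Set.Iio L)) (nhds (M * L))})

/-- `u` and `v` have the same boundary values `u(a⁺)=v(a⁺)`, `u(b⁻)=v(b⁻)`. -/
def SameBdry (a b : ℝ) (u v : ℝ → ℝ) : Prop :=
  (∀ c : ℝ, Tendsto v (nhdsWithin a (Set.Ioi a)) (nhds c) →
     Tendsto u (nhdsWithin a (Set.Ioi a)) (nhds c)) ∧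
  (∀ c : ℝ, Tendsto v (nhdsWithin b (Set.Iio b)) (nhds c) →
     Tendsto u (nhdsWithin b (Set.Iio b)) (nhds c))

/-- `v` is a local minimizer for `JF(α,β,f,(a,b),·)` among step functions with the
same boundary values. -/
def IsLocalMinJF (α β : ℝ) (f : ℝ → ℝ) (a b : ℝ) (v : ℝ → ℝ) : Prop :=
  IsStep a b v ∧
  ∀ u : ℝ → ℝ, IsStep a b u → SameBdry a b u v → JF α β f a b v ≤ JF α β f a b u

/-- `v` is an entire local minimizer for `JF(α,β,f,·,·)`. -/
def IsEntireLocalMinJF (α β : ℝ) (f : ℝ → ℝ) (v : ℝ → ℝ) : Prop :=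
  ∀ a b : ℝ, a < b → IsLocalMinJF α β f a b v

/-- `v` is a local minimizer for `RDPMF_n(β,f,(a,b),·)` among piecewise constant
functions with the same boundary values. -/
def IsLocalMinRDPMF (n : ℕ) (β : ℝ) (f : ℝ → ℝ) (a b : ℝ) (v : ℝ → ℝ) : Prop :=
  IsPC (dlt n) v ∧
  ∀ u : ℝ → ℝ, IsPC (dlt n) u →
    u (lowGrid (dlt n) a) = v (lowGrid (dlt n) a) →
    u (highGrid (dlt n) b - dlt n) = v (highGrid (dlt n) b - dlt n) →
    RDPMF n β f a b v ≤ RDPMF n β f a b u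

/-- `v` with the constant `e` added on `[p,q)`; the competitor used in all comparisons. -/
noncomputable def bump (p q e : ℝ) (v : ℝ → ℝ) (x : ℝ) : ℝ :=
  v x + if x ∈ Set.Ico p q then e else 0

lemma isStep_add_jump {a b : ℝ} {v : ℝ → ℝ} (hv : IsStep a b v) {p : ℝ}
    (hp : p ∈ Set.Ioo a b) (e : ℝ) :
    IsStep a b (fun x => v x + if p ≤ x then e else 0) := by
  classical
  obtain ⟨s, c, J, hs, hf⟩ := hv
  set J' : ℝ → ℝ := fun y => (if y ∈ s then J y else 0) + (if y = p then e else 0) with hJ'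
  refine ⟨(insert p s).filter (fun y => J' y ≠ 0), c, J', ?_, ?_⟩
  · intro y hy
    rw [Finset.mem_filter, Finset.mem_insert] at hy
    refine ⟨?_, hy.2⟩
    rcases hy.1 with rfl | h
    · exact hp
    · exact (hs y h).1
  · intro x hx
    have h1 : ∑ y ∈ (insert p s).filter (fun y => J' y ≠ 0), (if y ≤ x then J' y else 0)
        = ∑ y ∈ insert p s, (if y ≤ x then J' y else 0) := by
      rw [Finset.sum_filter]
      refine Finset.sum_congr rfl fun y _ => ?_
      by_cases h : J' y = 0 <;> simp [h]
    have h2 : ∀ y, (if y ≤ x then J' y else 0)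
        = (if y ∈ s then (if y ≤ x then J y else 0) else 0)
          + (if y = p then (if p ≤ x then e else 0) else 0) := by
      intro y
      by_cases h : y = p
      · subst h
        by_cases h' : y ≤ x <;> simp [hJ', h']
      · by_cases h' : y ≤ x <;> simp [hJ', h', h]
    have h3 : ∑ y ∈ insert p s, (if y ∈ s then (if y ≤ x then J y else 0) else 0)
        = ∑ y ∈ s, (if y ≤ x then J y else 0) := by
      rw [← Finset.sum_filter]
      refine Finset.sum_congr ?_ fun _ _ => rfl
      ext y
      simp only [Finset.mem_filter, Finset.mem_insert]
      tauto
    rw [h1, Finset.sum_congr rfl fun y _ => h2 y, Finset.sum_add_distrib, h3]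
    simp [hf x hx, add_assoc]

lemma isStep_bump {a b p q : ℝ} {v : ℝ → ℝ} (hv : IsStep a b v)
    (hp : p ∈ Set.Ioo a b) (hq : q ∈ Set.Ioo a b) (hpq : p < q) (e : ℝ) :
    IsStep a b (bump p q e v) := by
  have h := isStep_add_jump (isStep_add_jump hv hp e) hq (-e)
  convert h using 2 with x
  unfold bump
  by_cases h1 : p ≤ x <;> by_cases h2 : q ≤ x <;> simp [h1, h2, not_lt.mpr, lt_of_not_ge]
  exact absurd (hpq.le.trans h2) h1

/-- A step function is right continuous, and constant on each side of every point. -/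
lemma exists_local_values {a b : ℝ} {v : ℝ → ℝ} (hv : IsStep a b v) {x : ℝ}
    (hx : x ∈ Set.Ioo a b) :
    ∃ vl ε : ℝ, 0 < ε ∧ a < x - ε ∧ x + ε < b ∧ (∀ y ∈ Set.Ico x (x + ε), v y = v x) ∧
      ∀ y ∈ Set.Ico (x - ε) x, v y = vl := by
  obtain ⟨s, c, J, hs, hf⟩ := hv
  have hR : ∀ᶠ y in nhdsWithin x (Set.Ici x), ∀ p ∈ s, (p ≤ y ↔ p ≤ x) := by
    rw [Filter.eventually_all_finset]
    intro p _
    by_cases h : p ≤ x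
    · filter_upwards [self_mem_nhdsWithin] with y hy
      exact iff_of_true (h.trans hy) h
    · have : ∀ᶠ y in nhds x, y < p := eventually_lt_nhds (not_le.mp h)
      filter_upwards [nhdsWithin_le_nhds this] with y hy
      exact iff_of_false (not_le.mpr hy) h
  have hL : ∀ᶠ y in nhdsWithin x (Set.Iio x), ∀ p ∈ s, (p ≤ y ↔ p < x) := by
    rw [Filter.eventually_all_finset]
    intro p _
    by_cases h : p < x
    · have : ∀ᶠ y in nhds x, p < y := eventually_gt_nhds h
      filter_upwards [nhdsWithin_le_nhds this] with y hy
      exact iff_of_true hy.le h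
    · filter_upwards [self_mem_nhdsWithin] with y hy
      exact iff_of_false (fun h' => h (lt_of_le_of_lt h' hy)) h
  obtain ⟨r, hr, hR'⟩ := mem_nhdsGE_iff_exists_Ico_subset.mp hR
  obtain ⟨l, hl, hL'⟩ := mem_nhdsLT_iff_exists_Ioo_subset.mp hL
  have hr : x < r := hr
  have hl : l < x := hl
  obtain ⟨ε, hε, hε'⟩ : ∃ ε > 0, ε < min (min (r - x) (x - l)) (min (b - x) (x - a)) := by
    refine exists_between ?_
    simp only [lt_min_iff, sub_pos]
    exact ⟨⟨hr, hl⟩, hx.2, hx.1⟩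
  simp only [lt_min_iff] at hε'
  obtain ⟨⟨e1, e2⟩, e3, e4⟩ := hε'
  refine ⟨c + ∑ p ∈ s, (if p < x then J p else 0), ε, hε, by linarith, by linarith, ?_, ?_⟩
  · intro y hy
    have h := hR' (⟨hy.1, by linarith [hy.2]⟩ : y ∈ Set.Ico x r)
    rw [hf y ⟨by linarith [hy.1, hx.1], by linarith [hy.2]⟩, hf x hx]
    congr 1
    exact Finset.sum_congr rfl fun p hp => by simp only [h p hp]
  · intro y hy
    have h := hL' (⟨by linarith [hy.1], hy.2⟩ : y ∈ Set.Ioo l x)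
    rw [hf y ⟨by linarith [hy.1], by linarith [hy.2, hx.2]⟩]
    congr 1
    exact Finset.sum_congr rfl fun p hp => by simp only [h p hp]

lemma eventually_eq_of_sides {v : ℝ → ℝ} {x ε c : ℝ} (hε : 0 < ε)
    (h1 : ∀ y ∈ Set.Ico x (x + ε), v y = c) (h2 : ∀ y ∈ Set.Ioo (x - ε) x, v y = c) :
    ∀ᶠ y in nhds x, v y = c := by
  filter_upwards [Ioo_mem_nhds (by linarith : x - ε < x) (by linarith : x < x + ε)] with y hy
  rcases lt_or_ge y x with h | h
  · exact h2 y ⟨hy.1, h⟩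
  · exact h1 y ⟨h, hy.2⟩

lemma tendsto_left {v : ℝ → ℝ} {x ε c : ℝ} (hε : 0 < ε)
    (h2 : ∀ y ∈ Set.Ico (x - ε) x, v y = c) :
    Tendsto v (nhdsWithin x (Set.Iio x)) (nhds c) := by
  refine tendsto_const_nhds.congr' ?_
  filter_upwards [Ico_mem_nhdsLT (by linarith : x - ε < x)] with y hy
  exact (h2 y hy).symm

lemma eventually_eq_of_continuousAt {a b : ℝ} {v : ℝ → ℝ} (hv : IsStep a b v) {x : ℝ}
    (hx : x ∈ Set.Ioo a b) (hc : ContinuousAt v x) : ∀ᶠ y in nhds x, v y = v x := by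
  obtain ⟨vl, ε, hε, -, -, h1, h2⟩ := exists_local_values hv hx
  have h : vl = v x := tendsto_nhds_unique (tendsto_left hε h2) (hc.mono_left nhdsWithin_le_nhds)
  exact eventually_eq_of_sides hε h1 fun y hy => (h2 y ⟨hy.1.le, hy.2⟩).trans h

lemma const_of_continuous {a b p q : ℝ} {v : ℝ → ℝ} (hv : IsStep a b v) (hap : a ≤ p)
    (hqb : q ≤ b) (hc : ∀ x ∈ Set.Ioo p q, ContinuousAt v x) {x y : ℝ}
    (hx : x ∈ Set.Ioo p q) (hy : y ∈ Set.Ioo p q) : v x = v y := by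
  have hd : ∀ z ∈ Set.Ioo p q, HasDerivAt v 0 z := fun z hz =>
    (hasDerivAt_const z (v z)).congr_of_eventuallyEq
      (eventually_eq_of_continuousAt hv ⟨hap.trans_lt hz.1, hz.2.trans_le hqb⟩ (hc z hz))
  exact isOpen_Ioo.is_const_of_deriv_eq_zero isPreconnected_Ioo
    (fun z hz => (hd z hz).differentiableAt.differentiableWithinAt)
    (fun z hz => (hd z hz).deriv) hx hy

lemma finite_jumpSet {a b : ℝ} {v : ℝ → ℝ} (hv : IsStep a b v) : (jumpSet a b v).Finite := by
  obtain ⟨s, c, J, hs, hf⟩ := hv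
  refine s.finite_toSet.subset fun x hx => ?_
  by_contra hxs
  refine hx.2 ?_
  have h : ∀ᶠ y in nhds x, ∀ p ∈ s, (p ≤ y ↔ p ≤ x) := by
    rw [Filter.eventually_all_finset]
    intro p hp
    have hne : p ≠ x := fun h => hxs (h ▸ hp)
    rcases hne.lt_or_gt with h | h
    · filter_upwards [eventually_gt_nhds h] with y hy using iff_of_true hy.le h.le
    · filter_upwards [eventually_lt_nhds h] with y hy
      exact iff_of_false (not_le.mpr hy) (not_le.mpr h)
  refine (continuousAt_const (y := v x)).congr ?_
  filter_upwards [h, Ioo_mem_nhds hx.1.1 hx.1.2] with y hy hy'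
  rw [hf y hy', hf x hx.1]
  congr 1
  exact Finset.sum_congr rfl fun p hp => by simp only [hy p hp]

lemma continuousAt_bump {p q e x : ℝ} {v : ℝ → ℝ} (hp : x ≠ p) (hq : x ≠ q)
    (hc : ContinuousAt v x) : ContinuousAt (bump p q e v) x := by
  refine hc.add ((continuousAt_const (y := if x ∈ Set.Ico p q then e else 0)).congr ?_)
  have h1 : ∀ᶠ y in nhds x, (p ≤ y ↔ p ≤ x) := by
    rcases hp.lt_or_gt with h | h
    · filter_upwards [eventually_lt_nhds h] with y hy
      exact iff_of_false (not_le.mpr hy) (not_le.mpr h)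
    · filter_upwards [eventually_gt_nhds h] with y hy using iff_of_true hy.le h.le
  have h2 : ∀ᶠ y in nhds x, (y < q ↔ x < q) := by
    rcases hq.lt_or_gt with h | h
    · filter_upwards [eventually_lt_nhds h] with y hy using iff_of_true hy h
    · filter_upwards [eventually_gt_nhds h] with y hy
      exact iff_of_false (not_lt.mpr hy.le) (not_lt.mpr h.le)
  filter_upwards [h1, h2] with y h1 h2
  simp only [Set.mem_Ico, h1, h2]

lemma sameBdry_bump {a b p q e : ℝ} {v : ℝ → ℝ} (hp : a < p) (hq : q < b) :
    SameBdry a b (bump p q e v) v := by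
  constructor
  · intro c hc
    refine hc.congr' ?_
    filter_upwards [nhdsWithin_le_nhds (eventually_lt_nhds hp)] with y hy
    simp [bump, not_le.mpr hy]
  · intro c hc
    refine hc.congr' ?_
    filter_upwards [nhdsWithin_le_nhds (eventually_gt_nhds hq)] with y hy
    simp [bump, not_lt.mpr (le_of_lt hy)]

lemma integrable_sq {a b M : ℝ} {v : ℝ → ℝ} (hv : IsStep a b v) :
    IntegrableOn (fun x => (v x - M * x) ^ 2) (Set.Ioo a b) := by
  obtain ⟨s, c, J, hs, hf⟩ := hv
  have hsq : MemLp (fun x => (c + ∑ p ∈ s, (if p ≤ x then J p else 0)) - M * x) 2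
      (volume.restrict (Set.Ioo a b)) := by
    refine MemLp.sub (MemLp.add (memLp_const c) (memLp_finsetSum s fun p _ => ?_)) ?_
    · refine MemLp.of_bound (C := |J p|)
        (Measurable.ite measurableSet_Ici measurable_const measurable_const).aestronglyMeasurable
        (Filter.Eventually.of_forall fun x => ?_)
      split_ifs <;> simp
    · refine MemLp.of_bound (C := |M| * (|a| + |b|)) (by fun_prop) ?_
      filter_upwards [ae_restrict_mem measurableSet_Ioo] with x hx
      rw [Real.norm_eq_abs, abs_mul]
      refine mul_le_mul_of_nonneg_left (abs_le.mpr ⟨?_, ?_⟩) (abs_nonneg M)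
      · linarith [neg_abs_le a, abs_nonneg b, hx.1]
      · linarith [le_abs_self b, abs_nonneg a, hx.2]
  exact (integrableOn_congr_fun (fun x hx => by simp only [hf x hx]) measurableSet_Ioo).mpr
    hsq.integrable_sq

lemma integral_bump {a b p q M c d : ℝ} {v : ℝ → ℝ} (hv : IsStep a b v)
    (hp : p ∈ Set.Ioo a b) (hq : q ∈ Set.Ioo a b) (hpq : p < q)
    (hd : ∀ x ∈ Set.Ico p q, v x = d) :
    (∫ x in Set.Ioo a b, (bump p q (c - d) v x - M * x) ^ 2)
      = (∫ x in Set.Ioo a b, (v x - M * x) ^ 2) + (q - p) * ((c - d) * (c + d - M * (p + q))) := by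
  rw [← sub_eq_iff_eq_add', ← integral_sub (integrable_sq (isStep_bump hv hp hq hpq _))
    (integrable_sq hv)]
  have h : ∀ x, (bump p q (c - d) v x - M * x) ^ 2 - (v x - M * x) ^ 2
      = (Set.Ico p q).indicator (fun x => (c - d) * (c + d - 2 * M * x)) x := by
    intro x
    by_cases hx : x ∈ Set.Ico p q
    · rw [Set.indicator_of_mem hx, bump, if_pos hx, hd x hx]; ring
    · rw [Set.indicator_of_notMem hx, bump, if_neg hx]; ring
  have hsub : Set.Ico p q ⊆ Set.Ioo a b := fun x hx => ⟨hp.1.trans_le hx.1, hx.2.trans hq.2⟩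
  simp_rw [h]
  rw [setIntegral_indicator measurableSet_Ico,
    Set.inter_eq_right.mpr hsub,
    integral_Ico_eq_integral_Ioc, ← intervalIntegral.integral_of_le hpq.le,
    intervalIntegral.integral_const_mul, intervalIntegral.integral_sub
      (by simp) (by apply Continuous.intervalIntegrable; fun_prop),
    intervalIntegral.integral_const_mul]
  simp
  ring

/-- Comparing `v` with the competitor that replaces the value `d` by `c` on `[p,q)`, when this
creates at most `k` new jumps. -/
lemma comparison {α β M a b p q c d : ℝ} {v : ℝ → ℝ} (hα : 0 < α)
    (hv : IsLocalMinJF α β (fun x => M * x) a b v)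
    (hp : p ∈ Set.Ioo a b) (hq : q ∈ Set.Ioo a b) (hpq : p < q)
    (hd : ∀ x ∈ Set.Ico p q, v x = d) (k : ℕ)
    (hk : (jumpSet a b (bump p q (c - d) v)).ncard ≤ (jumpSet a b v).ncard + k) :
    0 ≤ α * k + β * ((q - p) * ((c - d) * (c + d - M * (p + q)))) := by
  have h := hv.2 _ (isStep_bump hv.1 hp hq hpq (c - d)) (sameBdry_bump hp.1 hq.2)
  unfold JF at h
  rw [integral_bump hv.1 hp hq hpq hd] at h
  have hk' : ((jumpSet a b (bump p q (c - d) v)).ncard : ℝ) ≤ (jumpSet a b v).ncard + k := by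
    exact_mod_cast hk
  have := mul_le_mul_of_nonneg_left hk' hα.le
  linarith

/-- Sliding a jump from `x` to `y` does not increase the number of jumps. -/
lemma ncard_jumpSet_slide {a b p q e x y : ℝ} {v : ℝ → ℝ} (hv : IsStep a b v)
    (hxy : p = x ∧ q = y ∨ p = y ∧ q = x) (hx : x ∈ jumpSet a b v)
    (hc : ContinuousAt (bump p q e v) x) :
    (jumpSet a b (bump p q e v)).ncard ≤ (jumpSet a b v).ncard + 0 := by
  have hfin := finite_jumpSet hv
  have hsub : jumpSet a b (bump p q e v) ⊆ insert y (jumpSet a b v \ {x}) := by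
    intro z hz
    by_cases hzy : z = y
    · exact Or.inl hzy
    have hzx : z ≠ x := fun h => hz.2 (h ▸ hc)
    refine Or.inr ⟨⟨hz.1, fun hcz => hz.2 ?_⟩, hzx⟩
    rcases hxy with ⟨rfl, rfl⟩ | ⟨rfl, rfl⟩
    · exact continuousAt_bump hzx hzy hcz
    · exact continuousAt_bump hzy hzx hcz
  calc _ ≤ (insert y (jumpSet a b v \ {x})).ncard :=
        Set.ncard_le_ncard hsub ((hfin.sdiff).insert y)
    _ ≤ (jumpSet a b v \ {x}).ncard + 1 := Set.ncard_insert_le _ _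
    _ = (jumpSet a b v).ncard + 0 := Set.ncard_sdiff_singleton_add_one hx hfin

/-- An affine function of `t` that is nonnegative for small `t > 0` is nonnegative at `0`. -/
lemma nonneg_of_small {A B ε : ℝ} (hε : 0 < ε) (h : ∀ t, 0 < t → t < ε → 0 ≤ A + B * t) :
    0 ≤ A := by
  have ht : Tendsto (fun t : ℝ => A + B * t) (nhdsWithin 0 (Set.Ioi 0)) (nhds A) := by
    have : ContinuousAt (fun t : ℝ => A + B * t) 0 := by fun_prop
    simpa using this.tendsto.mono_left nhdsWithin_le_nhds
  refine ge_of_tendsto ht ?_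
  filter_upwards [Ioo_mem_nhdsGT hε] with t ht using h t ht.1 ht.2

lemma jump_structure {α β M a b : ℝ} (hα : 0 < α) (hβ : 0 < β) {v : ℝ → ℝ}
    (hv : IsLocalMinJF α β (fun x => M * x) a b v) {x : ℝ} (hx : x ∈ Set.Ioo a b)
    (hc : ¬ ContinuousAt v x) :
    ∃ vl vr : ℝ,
        Tendsto v (nhdsWithin x (Set.Iio x)) (nhds vl) ∧
        Tendsto v (nhdsWithin x (Set.Ioi x)) (nhds vr) ∧
        vr - M * x = M * x - vl ∧
        (M ≠ 0 → 0 < (vr - M * x) * M) := by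
  obtain ⟨vl, ε, hε, ha, hb, hR, hL⟩ := exists_local_values hv.1 hx
  have hne : vl - v x ≠ 0 := by
    intro h
    refine hc ((continuousAt_const (y := v x)).congr ?_)
    filter_upwards [eventually_eq_of_sides hε hR fun y hy =>
      (hL y ⟨hy.1.le, hy.2⟩).trans (sub_eq_zero.mp h)] with y hy using hy.symm
  have hxj : x ∈ jumpSet a b v := ⟨hx, hc⟩
  -- sliding the jump to the right
  have key1 : ∀ t, 0 < t → t < ε → 0 ≤ (vl - v x) * (vl + v x - M * (2 * x + t)) := by
    intro t ht htε
    have hcont : ContinuousAt (bump x (x + t) (vl - v x) v) x := by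
      refine (continuousAt_const (y := vl)).congr ?_
      refine (eventually_eq_of_sides ht (fun y hy => ?_) fun y hy => ?_).mono
        fun y hy => hy.symm
      · rw [bump, if_pos hy, hR y ⟨hy.1, by linarith [hy.2]⟩]; ring
      · rw [bump, if_neg fun h => (hy.2.trans_le h.1).false, hL y ⟨by linarith [hy.1], hy.2⟩]
        ring
    have h := comparison (c := vl) hα hv hx ⟨by linarith [hx.1], by linarith⟩
      (by linarith : x < x + t) (fun y hy => hR y ⟨hy.1, by linarith [hy.2]⟩) 0
      (ncard_jumpSet_slide hv.1 (Or.inl ⟨rfl, rfl⟩) hxj hcont)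
    rw [Nat.cast_zero, mul_zero, zero_add, mul_nonneg_iff_of_pos_left hβ,
      mul_nonneg_iff_of_pos_left (by linarith)] at h
    linear_combination h
  -- sliding the jump to the left
  have key2 : ∀ t, 0 < t → t < ε → 0 ≤ (v x - vl) * (vl + v x - M * (2 * x - t)) := by
    intro t ht htε
    have hcont : ContinuousAt (bump (x - t) x (v x - vl) v) x := by
      refine (continuousAt_const (y := v x)).congr ?_
      refine (eventually_eq_of_sides ht (fun y hy => ?_) fun y hy => ?_).mono
        fun y hy => hy.symm
      · rw [bump, if_neg fun h => (h.2.trans_le hy.1).false, hR y ⟨hy.1, by linarith [hy.2]⟩]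
        ring
      · rw [bump, if_pos ⟨hy.1.le, hy.2⟩, hL y ⟨by linarith [hy.1], hy.2⟩]; ring
    have h := comparison (c := v x) hα hv (p := x - t) ⟨by linarith, by linarith [hx.2]⟩ hx
      (by linarith) (fun y hy => hL y ⟨by linarith [hy.1], hy.2⟩) 0
      (ncard_jumpSet_slide hv.1 (Or.inr ⟨rfl, rfl⟩) hxj hcont)
    rw [Nat.cast_zero, mul_zero, zero_add, mul_nonneg_iff_of_pos_left hβ,
      mul_nonneg_iff_of_pos_left (by linarith)] at h
    linear_combination h
  have h1 : 0 ≤ (vl - v x) * (vl + v x - 2 * M * x) :=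
    nonneg_of_small (B := -(vl - v x) * M) hε fun t ht ht' => by
      linear_combination key1 t ht ht'
  have h2 : 0 ≤ -((vl - v x) * (vl + v x - 2 * M * x)) :=
    nonneg_of_small (B := -(vl - v x) * M) hε fun t ht ht' => by
      linear_combination key2 t ht ht'
  have h3 : vl + v x - 2 * M * x = 0 :=
    (mul_eq_zero.mp (le_antisymm (by linarith) h1)).resolve_left hne
  refine ⟨vl, v x, tendsto_left hε hL, ?_, by linarith, fun hM => ?_⟩
  · refine tendsto_const_nhds.congr' ?_
    filter_upwards [Ioo_mem_nhdsGT (by linarith : x < x + ε)] with y hy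
    exact (hR y ⟨hy.1.le, hy.2⟩).symm
  · have h4 := key1 (ε / 2) (by linarith) (by linarith)
    have h5 : 0 ≤ (ε / 2) * (-(vl - v x) * M) := by
      linear_combination h4 + (vl - v x) * h3
    have h6 : 0 ≤ -(vl - v x) * M := (mul_nonneg_iff_of_pos_left (by linarith)).mp h5
    have h7 : -(vl - v x) * M ≠ 0 := mul_ne_zero (neg_ne_zero.mpr hne) hM
    have h8 : 0 < -(vl - v x) * M := lt_of_le_of_ne h6 h7.symm
    have h9 : -(vl - v x) * M = 2 * ((v x - M * x) * M) := by linear_combination -M * h3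
    linarith

lemma plateau_value {α β M a b : ℝ} (hα : 0 < α) (hβ : 0 < β) {v : ℝ → ℝ}
    (hv : IsLocalMinJF α β (fun x => M * x) a b v) {x₁ x₂ : ℝ}
    (h₁ : x₁ ∈ Set.Ioo a b) (h₂ : x₂ ∈ Set.Ioo a b) (h₁₂ : x₁ < x₂)
    (hd₁ : ¬ ContinuousAt v x₁) (hd₂ : ¬ ContinuousAt v x₂)
    (hc : ∀ x ∈ Set.Ioo x₁ x₂, ContinuousAt v x) :
    ∀ x ∈ Set.Ioo x₁ x₂, v x = M * (x₁ + x₂) / 2 := by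
  intro x hx
  -- by right continuity the constant value on `(x₁,x₂)` is also taken at `x₁`
  have hconst : ∀ y ∈ Set.Ico x₁ x₂, v y = v x := by
    intro y hy
    rcases hy.1.eq_or_lt with rfl | hlt
    · obtain ⟨vl, ε, hε, -, -, hR, -⟩ := exists_local_values hv.1 h₁
      obtain ⟨z, hz, hz'⟩ := exists_between (lt_min (by linarith : x₁ < x₁ + ε) h₁₂)
      rw [← hR z ⟨hz.le, hz'.trans_le (min_le_left _ _)⟩]
      exact const_of_continuous hv.1 h₁.1.le h₂.2.le hc ⟨hz, hz'.trans_le (min_le_right _ _)⟩ hx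
    · exact const_of_continuous hv.1 h₁.1.le h₂.2.le hc ⟨hlt, hy.2⟩ hx
  have hsub : jumpSet a b (bump x₁ x₂ (M * (x₁ + x₂) / 2 - v x) v) ⊆ jumpSet a b v := by
    intro z hz
    refine ⟨hz.1, fun hcz => hz.2 (continuousAt_bump ?_ ?_ hcz)⟩
    · rintro rfl; exact hd₁ hcz
    · rintro rfl; exact hd₂ hcz
  have h := comparison (c := M * (x₁ + x₂) / 2) hα hv h₁ h₂ h₁₂ hconst 0
    (Set.ncard_le_ncard hsub (finite_jumpSet hv.1))
  rw [Nat.cast_zero, mul_zero, zero_add, mul_nonneg_iff_of_pos_left hβ,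
    mul_nonneg_iff_of_pos_left (by linarith)] at h
  have h' : (v x - M * (x₁ + x₂) / 2) ^ 2 ≤ 0 := by linear_combination h
  exact sub_eq_zero.mp (pow_eq_zero_iff two_ne_zero |>.mp (le_antisymm h' (sq_nonneg _)))

/-- A constant local minimizer `d` stays close to the line in mean: otherwise inserting an optimal
plateau on almost all of `(a,b)`, at the cost of two jumps, lowers the energy. -/
lemma constant_bound {α β M a b d : ℝ} (hα : 0 < α) (hab : a < b) {v : ℝ → ℝ}
    (hv : IsLocalMinJF α β (fun x => M * x) a b v)
    (hc : ∀ x ∈ Set.Ioo a b, ContinuousAt v x) (hd : ∀ x ∈ Set.Ioo a b, v x = d) :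
    β * ((b - a) * (d - M * (a + b) / 2) ^ 2) ≤ 2 * α := by
  refine sub_nonneg.mp (nonneg_of_small (B := 2 * β * (d - M * (a + b) / 2) ^ 2)
    (by linarith : 0 < (b - a) / 2) fun t ht ht' => ?_)
  have hsub : jumpSet a b (bump (a + t) (b - t) (M * (a + b) / 2 - d) v) ⊆ {a + t, b - t} := by
    intro z hz
    by_contra hne
    simp only [Set.mem_insert_iff, Set.mem_singleton_iff, not_or] at hne
    exact hz.2 (continuousAt_bump hne.1 hne.2 (hc z hz.1))
  have hk : (jumpSet a b (bump (a + t) (b - t) (M * (a + b) / 2 - d) v)).ncard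
      ≤ (jumpSet a b v).ncard + 2 :=
    (Set.ncard_le_ncard hsub (Set.toFinite _)).trans
      ((Set.ncard_insert_le _ _).trans (by rw [Set.ncard_singleton]; omega))
  have h := comparison (c := M * (a + b) / 2) hα hv (p := a + t) (q := b - t)
    ⟨by linarith, by linarith⟩ ⟨by linarith, by linarith⟩ (by linarith)
    (fun y hy => hd y ⟨by linarith [hy.1], by linarith [hy.2]⟩) 2 hk
  push_cast at h
  linear_combination h

lemma exists_jump_or_crossing {α β M a b : ℝ} (hα : 0 < α) (hβ : 0 < β) (hab : a < b)
    {v : ℝ → ℝ} (hv : IsLocalMinJF α β (fun x => M * x) a b v) (hM : M ≠ 0)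
    (hL : 2 * (α / (β * M ^ 2)) ^ ((1 : ℝ) / 3) < b - a) :
    (∃ x ∈ Set.Ioo a b, ¬ ContinuousAt v x) ∨
      (∃ y ∈ Set.Ioo a b, ContinuousAt v y ∧ v y = M * y) := by
  by_contra hcon
  push Not at hcon
  obtain ⟨hc, hcross⟩ := hcon
  have hm : (a + b) / 2 ∈ Set.Ioo a b := ⟨by linarith, by linarith⟩
  set d := v ((a + b) / 2) with hdd
  have hd : ∀ x ∈ Set.Ioo a b, v x = d := fun x hx =>
    const_of_continuous hv.1 le_rfl le_rfl hc hx hm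
  have hbound := constant_bound hα hab hv hc hd
  have hy : d / M ∉ Set.Ioo a b := fun h =>
    hcross _ h (hc _ h) (by rw [hd _ h]; field_simp)
  -- the crossing abscissa `d / M` is at distance at least `(b - a) / 2` from the midpoint
  have hdist : ((b - a) / 2) ^ 2 ≤ (d / M - (a + b) / 2) ^ 2 := by
    rw [Set.mem_Ioo, not_and_or, not_lt, not_lt] at hy
    rcases hy with h | h <;> nlinarith
  have hsq : (d - M * (a + b) / 2) ^ 2 = M ^ 2 * (d / M - (a + b) / 2) ^ 2 := by
    field_simp
  have hM2 : 0 < M ^ 2 := by positivity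
  set r := (α / (β * M ^ 2)) ^ ((1 : ℝ) / 3) with hr
  have hr0 : 0 ≤ r := by positivity
  have hr3 : r ^ 3 = α / (β * M ^ 2) := by
    rw [hr, ← Real.rpow_natCast, ← Real.rpow_mul (by positivity)]
    norm_num
  have hcube : (2 * r) ^ 3 < (b - a) ^ 3 := pow_lt_pow_left₀ hL (by positivity) (by norm_num)
  have hα' : β * M ^ 2 * r ^ 3 = α := by rw [hr3]; field_simp
  rw [hsq] at hbound
  have h1 : β * M ^ 2 * (b - a) * ((b - a) / 2) ^ 2
      ≤ β * M ^ 2 * (b - a) * (d / M - (a + b) / 2) ^ 2 :=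
    mul_le_mul_of_nonneg_left hdist (mul_nonneg (by positivity) (by linarith))
  have h2 : β * M ^ 2 * (2 * r) ^ 3 < β * M ^ 2 * (b - a) ^ 3 :=
    mul_lt_mul_of_pos_left hcube (by positivity)
  nlinarith

/-- Structure of local minimizers `v` of `JF(α,β,Mx,(a,b),·)`:
(i) if `M ≠ 0` and `b − a > L₀ = 2(α/(βM²))^{1/3}` then `(a,b)` contains a jump point
of `v` or an intersection of `v` with the line `Mx`; (ii) at every jump point `x` one has
`v(x⁺) − Mx = Mx − v(x⁻)`, with the same sign as `M` when `M ≠ 0`; (iii) between two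
consecutive jump points `x₁ < x₂` the function equals `M(x₁+x₂)/2`. -/
theorem local_minimizers_structure
    (α β M : ℝ) (hα : 0 < α) (hβ : 0 < β)
    (a b : ℝ) (hab : a < b) (v : ℝ → ℝ)
    (hv : IsLocalMinJF α β (fun x => M * x) a b v) :
    (M ≠ 0 → 2 * (α / (β * M ^ 2)) ^ ((1 : ℝ) / 3) < b - a →
      (∃ x ∈ Set.Ioo a b, ¬ ContinuousAt v x) ∨
      (∃ y ∈ Set.Ioo a b, ContinuousAt v y ∧ v y = M * y)) ∧
    (∀ x ∈ Set.Ioo a b, ¬ ContinuousAt v x →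
      ∃ vl vr : ℝ,
        Tendsto v (nhdsWithin x (Set.Iio x)) (nhds vl) ∧
        Tendsto v (nhdsWithin x (Set.Ioi x)) (nhds vr) ∧
        vr - M * x = M * x - vl ∧
        (M ≠ 0 → 0 < (vr - M * x) * M)) ∧
    (∀ x₁ x₂ : ℝ, x₁ ∈ Set.Ioo a b → x₂ ∈ Set.Ioo a b → x₁ < x₂ →
      ¬ ContinuousAt v x₁ → ¬ ContinuousAt v x₂ →
      (∀ x ∈ Set.Ioo x₁ x₂, ContinuousAt v x) →
      ∀ x ∈ Set.Ioo x₁ x₂, v x = M * (x₁ + x₂) / 2) := by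
  exact ⟨fun hM hL => exists_jump_or_crossing hα hβ hab hv hM hL,
    fun x hx hc => jump_structure hα hβ hv hx hc,
    fun x₁ x₂ h₁ h₂ h₁₂ hd₁ hd₂ hc => plateau_value hα hβ hv h₁ h₂ h₁₂ hd₁ hd₂ hc⟩

end PeronaMalik
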